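/- arXiv:2006.04402 — 9 statements merged into one kernel-verified Lean document; each statement's English description precedes it below -/
import Mathlib

section
/- Let S and T be valid configurations of n points each in ℝ². Then for every unit vector δ ∈ ℝ², except possibly for finitely many unit vectors, there exists a real number c > 0 such that, setting v = c • δ, the unlabeled reconfiguration problem from S to T + v is feasible. Formally: the set of unit vectors δ ∈ ℝ² for which no c > 0 makes the problem from S to T + c • δ feasible is finite. -/
open Metric

abbrev Pt : Type := EuclideanSpace ℝ (Fin 2)

/-- The ordered sequence of matched pairs `(s i, t i)` is a valid itinerary for
translation `v`: the unit disc moved at step `i` from `s i` to `t i + v` never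
overlaps the interior of a still-unmoved disc or an already-placed disc. -/
def ValidItinerary {n : ℕ} (s t : Fin n → Pt) (v : Pt) : Prop :=
  ∀ i : Fin n, ∀ x ∈ segment ℝ (s i) (t i + v),
    (∀ j : Fin n, i < j → 2 ≤ dist x (s j)) ∧
    (∀ j : Fin n, j < i → 2 ≤ dist x (t j + v))

/-- The unlabeled reconfiguration problem from `S` to `T'` is feasible: there are
enumerations of `S` and `T'` forming a valid itinerary for translation `0`. -/
def Feasible (n : ℕ) (S T' : Set Pt) : Prop :=
  ∃ s t : Fin n → Pt,
    Function.Injective s ∧ Function.Injective t ∧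
    Set.range s = S ∧ Set.range t = T' ∧
    ValidItinerary s t 0

/-- Unit vectors of the plane orthogonal to a fixed nonzero vector form a finite set. -/
lemma finite_orth (d : Pt) (hd : d ≠ 0) : {δ : Pt | ‖δ‖ = 1 ∧ inner ℝ δ d = 0}.Finite := by
  set r := ‖d‖ with hr
  have hr0 : 0 < r := norm_pos_iff.mpr hd
  have hr2 : r ^ 2 = d 0 ^ 2 + d 1 ^ 2 := by
    rw [hr, EuclideanSpace.real_norm_sq_eq, Fin.sum_univ_two]
  refine (((Set.finite_singleton (-r)).insert r).image
    (fun e : ℝ => (!₂[-(d 1) * e / r ^ 2, d 0 * e / r ^ 2] : Pt))).subset ?_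
  rintro δ ⟨h1, h2⟩
  have h1' : δ 0 ^ 2 + δ 1 ^ 2 = 1 := by
    rw [← Fin.sum_univ_two (fun i => δ i ^ 2), ← EuclideanSpace.real_norm_sq_eq, h1]; norm_num
  have h2' : δ 0 * d 0 + δ 1 * d 1 = 0 := by
    simp [PiLp.inner_apply, Fin.sum_univ_two] at h2
    linarith
  refine ⟨d 0 * δ 1 - d 1 * δ 0, ?_, ?_⟩
  · have : (d 0 * δ 1 - d 1 * δ 0) ^ 2 = r ^ 2 := by
      rw [hr2]
      linear_combination (d 0 ^ 2 + d 1 ^ 2) * h1' - (δ 0 * d 0 + δ 1 * d 1) * h2'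
    simpa using sq_eq_sq_iff_eq_or_eq_neg.mp this
  · ext i
    fin_cases i
    · simp
      rw [div_eq_iff (by positivity), hr2]
      linear_combination (-d 0) * h2'
    · simp
      rw [div_eq_iff (by positivity), hr2]
      linear_combination (-d 1) * h2'

/-- Enumerate a finite set by decreasing values of an injective function. -/
lemma exists_enum (n : ℕ) (S : Finset Pt) (hn : S.card = n) (f : Pt → ℝ)
    (hf : Set.InjOn f S) :
    ∃ s : Fin n → Pt, Function.Injective s ∧ Set.range s = S ∧ ∀ i j, i < j → f (s j) < f (s i) := by
  classical
  have hc : (S.image f).card = n := by rw [Finset.card_image_of_injOn hf, hn]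
  have hm : ∀ i : Fin n, ∃ p ∈ S, f p = (S.image f).orderEmbOfFin hc i.rev := fun i => Finset.mem_image.mp (Finset.orderEmbOfFin_mem (S.image f) hc i.rev)
  choose s hs hfs using hm
  have hlt : ∀ i j, i < j → f (s j) < f (s i) := fun i j hij => by
    rw [hfs, hfs]
    exact ((S.image f).orderEmbOfFin hc).strictMono (Fin.rev_lt_rev.mpr hij)
  have hinj : Function.Injective s := by
    intro i j h
    by_contra hne
    rcases lt_or_gt_of_ne hne with h' | h'
    · have := hlt _ _ h'; rw [h] at this; exact lt_irrefl _ this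
    · have := hlt _ _ h'; rw [h] at this; exact lt_irrefl _ this
  refine ⟨s, hinj, ?_, hlt⟩
  have : Finset.univ.image s = S := by
    apply Finset.eq_of_subset_of_card_le
    · intro x hx
      obtain ⟨i, -, rfl⟩ := Finset.mem_image.mp hx
      exact hs i
    · rw [Finset.card_image_of_injective _ hinj, hn]; simp
  rw [← this]; simp

/-- Moving away keeps the distance. -/
lemma dist_away (a b w : Pt) (l : ℝ) (hl : 0 ≤ l) (hab : 2 ≤ dist a b)
    (h : 0 ≤ inner ℝ (a - b) w) : 2 ≤ dist (a + l • w) b := by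
  refine hab.trans ?_
  rw [dist_eq_norm, dist_eq_norm]
  apply le_of_sq_le_sq _ (norm_nonneg _)
  have : a + l • w - b = (a - b) + l • w := by abel
  rw [this, norm_add_sq_real, inner_smul_right]
  nlinarith [mul_nonneg hl h, sq_nonneg ‖l • w‖]

lemma ev_pos (a b : ℝ) (hb : 0 < b) : ∀ᶠ c : ℝ in Filter.atTop, 0 ≤ a + c * b := by
  filter_upwards [Filter.eventually_ge_atTop (-a / b)] with c hc
  rw [div_le_iff₀ hb] at hc
  linarith

/-- For valid configurations `S` and `T` of `n` points each, the set of unit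
directions `δ` for which no positive multiple `c • δ` yields a feasible unlabeled
reconfiguration problem from `S` to `T + c • δ` is finite. -/
theorem stmt0 (n : ℕ) (S T : Finset Pt)
    (hSn : S.card = n) (hTn : T.card = n)
    (hS : ∀ p ∈ S, ∀ q ∈ S, p ≠ q → 2 ≤ dist p q)
    (hT : ∀ p ∈ T, ∀ q ∈ T, p ≠ q → 2 ≤ dist p q) :
    {δ : Pt | ‖δ‖ = 1 ∧
      ¬ ∃ c : ℝ, 0 < c ∧
        Feasible n (S : Set Pt) ((fun p => p + c • δ) '' (T : Set Pt))}.Finite := by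
  classical
  have key : (⋃ x ∈ ((S ×ˢ S ∪ T ×ˢ T).filter (fun x => x.1 ≠ x.2)),
      {δ : Pt | ‖δ‖ = 1 ∧ inner ℝ δ (x.1 - x.2) = 0}).Finite := by
    refine Set.Finite.biUnion (Finset.finite_toSet _) ?_
    intro x hx
    exact finite_orth _ (sub_ne_zero.mpr (Finset.mem_filter.mp hx).2)
  refine key.subset ?_
  rintro δ ⟨h1, h2⟩
  by_contra hδ
  apply h2
  clear h2
  simp only [Set.mem_iUnion, Finset.mem_filter, Finset.mem_union, Finset.mem_product,
    Set.mem_ofPred_eq, not_exists, not_and, Prod.forall] at hδ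
  have hSi : Set.InjOn (fun p : Pt => inner ℝ δ p) S := by
    intro p hp q hq h
    by_contra hne
    exact hδ p q ⟨Or.inl ⟨hp, hq⟩, hne⟩ h1 (by rw [inner_sub_right]; exact sub_eq_zero.mpr h)
  have hTi : Set.InjOn (fun p : Pt => inner ℝ δ p) T := by
    intro p hp q hq h
    by_contra hne
    exact hδ p q ⟨Or.inr ⟨hp, hq⟩, hne⟩ h1 (by rw [inner_sub_right]; exact sub_eq_zero.mpr h)
  obtain ⟨s, sinj, srange, slt⟩ := exists_enum n S hSn _ hSi
  obtain ⟨t, tinj, trange, tlt⟩ := exists_enum n T hTn _ hTi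
  have hsm : ∀ i, s i ∈ S := fun i => by
    have : s i ∈ (S : Set Pt) := srange ▸ Set.mem_range_self i
    exact this
  have htm : ∀ i, t i ∈ T := fun i => by
    have : t i ∈ (T : Set Pt) := trange ▸ Set.mem_range_self i
    exact this
  have e1 : ∀ᶠ c : ℝ in Filter.atTop, ∀ i j, i < j →
      0 ≤ inner ℝ (s i - s j) (t i - s i) + c * inner ℝ (s i - s j) δ := by
    simp only [Filter.eventually_all]
    intro i j hij
    apply ev_pos
    rw [real_inner_comm, inner_sub_right]
    exact sub_pos.mpr (slt i j hij)
  have e2 : ∀ᶠ c : ℝ in Filter.atTop, ∀ i j, j < i →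
      0 ≤ inner ℝ (t j - t i) (t i - s i) + c * inner ℝ (t j - t i) δ := by
    simp only [Filter.eventually_all]
    intro i j hij
    apply ev_pos
    rw [real_inner_comm, inner_sub_right]
    exact sub_pos.mpr (tlt j i hij)
  obtain ⟨c, hc1, hc2, hc0⟩ := (e1.and (e2.and (Filter.eventually_gt_atTop 0))).exists
  refine ⟨c, hc0, s, fun i => t i + c • δ, sinj, ?_, srange, ?_, ?_⟩
  · intro i j h
    exact tinj (add_right_cancel h)
  · rw [← trange, ← Set.range_comp]; rfl
  · intro i x hx
    obtain ⟨a, b, ha, hb, hab, rfl⟩ := hx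
    obtain rfl : a = 1 - b := by linarith
    refine ⟨fun j hij => ?_, fun j hij => ?_⟩
    · have := dist_away (s i) (s j) (t i - s i + c • δ) b hb
        (hS _ (hsm i) _ (hsm j) (sinj.ne hij.ne)) (by
          rw [inner_add_right, inner_smul_right]; exact hc1 i j hij)
      convert this using 2
      module
    · have := dist_away (t i + c • δ) (t j + c • δ) (-(t i - s i + c • δ)) (1 - b) ha
        (by rw [dist_add_right]; exact hT _ (htm i) _ (htm j) (tinj.ne hij.ne')) (by
          rw [add_sub_add_right_eq_sub, inner_neg_right, ← inner_neg_left, neg_sub,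
            inner_add_right, inner_smul_right]
          exact hc2 i j hij)
      convert this using 2
      · module
      · module
end

section
/- Let s, t : Fin n → ℝ² and v ∈ ℝ² be such that the points s i have pairwise distances at least 2 and the points t i + v have pairwise distances at least 2. Define the blocking relation B on Fin n by: B i j holds iff i ≠ j and either some point of the closed segment from s j to t j + v is at distance < 2 from s i, or some point of the closed segment from s i to t i + v is at distance < 2 from t j + v. Then there exists a permutation σ of Fin n such that the sequence (s σ(1), t σ(1)), …, (s σ(n), t σ(n)) is a valid itinerary for translation v if and only if B has no directed cycle (equivalently, the transitive closure of B is irreflexive). -/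
open Metric

/-- Topological sorting of an acyclic relation on `Fin n`. -/
theorem exists_topological_sort {n : ℕ} (r : Fin n → Fin n → Prop)
    (h : ∀ i, ¬ Relation.TransGen r i i) :
    ∃ σ : Equiv.Perm (Fin n), ∀ a b, r (σ a) (σ b) → a < b := by
  classical
  let f : Fin n → ℕ := fun i => (Finset.univ.filter fun j => Relation.TransGen r j i).card
  have hf : ∀ i j, r i j → f i < f j := by
    intro i j hij
    apply Finset.card_lt_card
    rw [Finset.ssubset_iff_of_subset]
    · exact ⟨i, by simpa using Relation.TransGen.single hij, by simpa using h i⟩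
    · intro k hk
      simp only [Finset.mem_filter, Finset.mem_univ, true_and] at hk ⊢
      exact hk.tail hij
  refine ⟨Tuple.sort f, fun a b hab => ?_⟩
  exact (Tuple.monotone_sort f).reflect_lt (hf _ _ hab)

/-- Given start points with pairwise distances ≥ 2 and translated target points
with pairwise distances ≥ 2, some ordering of the matched pairs is a valid
itinerary for translation `v` if and only if the blocking relation has no
directed cycle (its transitive closure is irreflexive). -/
theorem stmt3 {n : ℕ} (s t : Fin n → Pt) (v : Pt)
    (hs : ∀ i j : Fin n, i ≠ j → 2 ≤ dist (s i) (s j))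
    (ht : ∀ i j : Fin n, i ≠ j → 2 ≤ dist (t i + v) (t j + v)) :
    (∃ σ : Equiv.Perm (Fin n), ValidItinerary (s ∘ σ) (t ∘ σ) v) ↔
      ∀ i : Fin n, ¬ Relation.TransGen
        (fun i j : Fin n => i ≠ j ∧
          ((∃ x ∈ segment ℝ (s j) (t j + v), dist x (s i) < 2) ∨
           (∃ x ∈ segment ℝ (s i) (t i + v), dist x (t j + v) < 2))) i i := by
  constructor
  · rintro ⟨σ, hσ⟩ i hi
    have key : ∀ i j, Relation.TransGen (fun i j : Fin n => i ≠ j ∧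
          ((∃ x ∈ segment ℝ (s j) (t j + v), dist x (s i) < 2) ∨
           (∃ x ∈ segment ℝ (s i) (t i + v), dist x (t j + v) < 2))) i j →
        σ.symm i < σ.symm j := by
      have step : ∀ i j : Fin n, (i ≠ j ∧
          ((∃ x ∈ segment ℝ (s j) (t j + v), dist x (s i) < 2) ∨
           (∃ x ∈ segment ℝ (s i) (t i + v), dist x (t j + v) < 2))) →
          σ.symm i < σ.symm j := by
        rintro i j ⟨hne, hb⟩
        by_contra hlt
        have hlt' : σ.symm j < σ.symm i :=
          lt_of_le_of_ne (not_lt.mp hlt) (fun h => hne (σ.symm.injective h).symm)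
        rcases hb with ⟨x, hx, hd⟩ | ⟨x, hx, hd⟩
        · have := (hσ (σ.symm j) x (by simpa using hx)).1 _ hlt'
          simp only [Function.comp_apply, Equiv.apply_symm_apply] at this
          linarith
        · have := (hσ (σ.symm i) x (by simpa using hx)).2 _ hlt'
          simp only [Function.comp_apply, Equiv.apply_symm_apply] at this
          linarith
      intro i j hij
      induction hij with
      | single h => exact step _ _ h
      | tail _ h ih => exact ih.trans (step _ _ h)
    exact lt_irrefl _ (key i i hi)
  · intro h
    obtain ⟨σ, hσ⟩ := exists_topological_sort _ h
    refine ⟨σ, fun i x hx => ⟨fun j hij => ?_, fun j hij => ?_⟩⟩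
    · by_contra hd
      exact lt_asymm hij (hσ j i ⟨fun e => hij.ne' (σ.injective e),
        Or.inl ⟨x, hx, not_le.mp hd⟩⟩)
    · by_contra hd
      exact lt_asymm hij (hσ i j ⟨fun e => hij.ne' (σ.injective e),
        Or.inr ⟨x, hx, not_le.mp hd⟩⟩)
end

section
/- Let a, b, c ∈ ℝ² with dist(a,b) > 2. Then the vippodrome {v ∈ ℝ² : closedBall(a,1) ∩ convexHull(closedBall(b,1) ∪ closedBall(c + v,1)) ≠ ∅} equals the set {b + t • (x − b) − c : t ∈ ℝ, t ≥ 1, x ∈ closedBall(a,2)}; that is, it is the translate by −c of the shadow cone of the closed disc of radius 2 centered at a as seen from the point b. -/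
open Metric

/-- The vippodrome of the first type — the set of translations `v` for which the
unit disc at `a` meets the hippodrome of `b` and `c + v` — is the translate by
`-c` of the shadow cone of the disc of radius 2 around `a` as seen from `b`. -/
theorem stmt5 (a b c : Pt) (h : 2 < dist a b) :
    {v : Pt | (closedBall a 1 ∩
        convexHull ℝ (closedBall b 1 ∪ closedBall (c + v) 1)).Nonempty} =
      {w : Pt | ∃ t : ℝ, 1 ≤ t ∧ ∃ x ∈ closedBall a 2, w = b + t • (x - b) - c} := by
  ext v
  simp only [Set.mem_ofPred_eq]
  rw [convexHull_union ⟨b, mem_closedBall_self zero_le_one⟩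
    ⟨c + v, mem_closedBall_self zero_le_one⟩,
    (convex_closedBall b 1).convexHull_eq, (convex_closedBall (c + v) 1).convexHull_eq]
  constructor
  · rintro ⟨y, hya, hy⟩
    obtain ⟨p, hp, q, hq, α, β, hα, hβ, hαβ, rfl⟩ := mem_convexJoin.1 hy
    rw [mem_closedBall, dist_eq_norm] at hya hp hq
    have hx : ‖(α • b + β • (c + v)) - a‖ ≤ 2 := by
      have e : (α • b + β • (c + v)) - a
          = (α • p + β • q - a) - (α • (p - b) + β • (q - (c + v))) := by module
      have h1 : ‖α • (p - b) + β • (q - (c + v))‖ ≤ 1 := by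
        refine (norm_add_le _ _).trans ?_
        rw [norm_smul, norm_smul, Real.norm_of_nonneg hα, Real.norm_of_nonneg hβ]
        nlinarith
      rw [e]
      refine (norm_sub_le _ _).trans ?_
      linarith
    have hβ0 : β ≠ 0 := by
      rintro rfl
      have : α = 1 := by linarith
      subst this
      rw [one_smul, zero_smul, add_zero, ← dist_eq_norm, dist_comm] at hx
      linarith
    have hβp : 0 < β := lt_of_le_of_ne hβ (Ne.symm hβ0)
    refine ⟨β⁻¹, (one_le_inv₀ hβp).2 (by linarith), α • b + β • (c + v), ?_, ?_⟩
    · rwa [mem_closedBall, dist_eq_norm]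
    · have : α = 1 - β := by linarith
      subst this
      have e : ((1 - β) • b + β • (c + v)) - b = β • (c + v - b) := by module
      rw [e, inv_smul_smul₀ hβ0]
      module
  · rintro ⟨t, ht, x, hx, rfl⟩
    rw [mem_closedBall, dist_eq_norm] at hx
    have ht0 : t ≠ 0 := by positivity
    have hu : ‖(1 / 2 : ℝ) • (a - x)‖ ≤ 1 := by
      rw [norm_smul, norm_sub_rev, Real.norm_of_nonneg (by norm_num)]
      linarith
    refine ⟨x + (1 / 2 : ℝ) • (a - x), ?_, mem_convexJoin.2
      ⟨b + (1 / 2 : ℝ) • (a - x), ?_,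
        c + (b + t • (x - b) - c) + (1 / 2 : ℝ) • (a - x), ?_,
        1 - t⁻¹, t⁻¹, ?_, by positivity, by ring, ?_⟩⟩
    · rw [mem_closedBall, dist_eq_norm, ← norm_neg]
      have e : -(x + (1 / 2 : ℝ) • (a - x) - a) = (1 / 2 : ℝ) • (a - x) := by module
      rw [e]
      exact hu
    · simpa [mem_closedBall, dist_eq_norm] using hu
    · rw [mem_closedBall, dist_eq_norm, add_sub_cancel_left]
      exact hu
    · have := inv_le_one_of_one_le₀ ht
      linarith
    · have e : t⁻¹ • t • (x - b) = x - b := inv_smul_smul₀ ht0 _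
      have e2 : (1 - t⁻¹) • (b + (1 / 2 : ℝ) • (a - x)) +
          t⁻¹ • (c + (b + t • (x - b) - c) + (1 / 2 : ℝ) • (a - x))
          = b + (1 / 2 : ℝ) • (a - x) + t⁻¹ • t • (x - b) := by module
      rw [e2, e]
      module
end

section
/- Let u₁, u₂ be linearly independent vectors in ℝ² and w₁, w₂ be linearly independent vectors in ℝ², and let p, q ∈ ℝ². Set W₁ = p + {α•u₁ + β•u₂ : α, β ≥ 0} and W₂ = q + {α•w₁ + β•w₂ : α, β ≥ 0} (closed convex wedges with apexes p and q and opening angles less than π). Then the set frontier(W₁ + closedBall(0,2)) ∩ frontier(W₂ + closedBall(0,2)) is either infinite or contains at most four points, where + denotes Minkowski sum and frontier denotes the topological boundary in ℝ². -/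
open Metric Pointwise

/-- Euclidean dot product in coordinates. -/
def dt (x y : Pt) : ℝ := x 0 * y 0 + x 1 * y 1

/-- Planar cross product. -/
def cr (x y : Pt) : ℝ := x 0 * y 1 - x 1 * y 0

/-- Right-hand normal of a direction. -/
def nrm (d : Pt) : Pt := !₂[d 1, - d 0]

/-- What is needed about the boundary `F` of an expanded wedge: `N` is the cone of outward
normals, `p` the apex and `b` an interior direction of the wedge. -/
structure Sys (F N : Set Pt) (p b : Pt) : Prop where
  cone : ∀ n ∈ N, ∀ m ∈ N, ∀ α β : ℝ, 0 ≤ α → 0 ≤ β → α • n + β • m ∈ N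
  neg : ∀ n ∈ N, n ≠ 0 → dt n b < 0
  sup : ∀ x ∈ F, ∃ ν ∈ N, dt ν ν = 1 ∧ dt (x - p) ν = 2
  le : ∀ x ∈ F, ∀ n ∈ N, dt n n = 1 → dt (x - p) n ≤ 2
  seg : ∀ x ∈ F, ∀ y ∈ F, ∀ n ∈ N, dt n n = 1 → dt (x - p) n = 2 → dt (y - p) n = 2 →
    ∀ t : ℝ, 0 ≤ t → t ≤ 1 → x + t • (y - x) ∈ F
  arc : ∀ n ∈ N, dt n n = 1 → p + (2 : ℝ) • n ∈ F

theorem ne_zero_of_unit {n : Pt} (h : dt n n = 1) : n ≠ 0 := by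
  rintro rfl
  simp [dt] at h

theorem pt_ext {x y : Pt} (h0 : x 0 = y 0) (h1 : x 1 = y 1) : x = y := by
  ext i
  fin_cases i
  · exact h0
  · exact h1

namespace Sys

variable {F N F' N' : Set Pt} {p b p' b' : Pt}

/-- Support normal at a boundary point. -/
theorem supp (S : Sys F N p b) {x : Pt} (hx : x ∈ F) :
    ∃ ν ∈ N, dt ν ν = 1 ∧ dt (x - p) ν = 2 ∧ dt ν b < 0 ∧ ∀ y ∈ F, dt (y - x) ν ≤ 0 := by
  obtain ⟨ν, hν, h1, h2⟩ := S.sup x hx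
  refine ⟨ν, hν, h1, h2, S.neg ν hν (ne_zero_of_unit h1), fun y hy => ?_⟩
  have := S.le y hy ν hν h1
  simp only [dt, PiLp.sub_apply] at *
  linarith

theorem inj (S : Sys F N p b) {x y : Pt} (hx : x ∈ F) (hy : y ∈ F) (h : cr x b = cr y b) :
    x = y := by
  obtain ⟨ν, -, -, -, hν, h1⟩ := S.supp hx
  obtain ⟨μ, -, -, -, hμ, h2⟩ := S.supp hy
  have a1 := h1 y hy
  have a2 := h2 x hx
  have e : dt ν b * dt (x - y) μ = - (dt (y - x) ν * dt μ b) := by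
    simp only [dt, cr, PiLp.sub_apply] at *
    linear_combination (-ν 0 * μ 1 + ν 1 * μ 0) * h
  have z : dt (y - x) ν = 0 := by
    have : 0 ≤ dt ν b * dt (x - y) μ := mul_nonneg_of_nonpos_of_nonpos hν.le a2
    have : 0 ≤ dt (y - x) ν * dt μ b := mul_nonneg_of_nonpos_of_nonpos a1 hμ.le
    have : dt (y - x) ν * dt μ b = 0 := by linarith
    rcases mul_eq_zero.1 this with h | h
    · exact h
    · exact absurd h hμ.ne
  apply pt_ext
  · apply mul_left_cancel₀ hν.ne
    simp only [dt, cr, PiLp.sub_apply] at *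
    linear_combination ν 1 * h - b 0 * z
  · apply mul_left_cancel₀ hν.ne
    simp only [dt, cr, PiLp.sub_apply] at *
    linear_combination - ν 0 * h - b 1 * z

/-- Three boundary points in order make a (weak) left turn. -/
theorem conv (S : Sys F N p b) {x y z : Pt} (hx : x ∈ F) (hy : y ∈ F) (hz : z ∈ F)
    (hxy : cr x b < cr y b) (hyz : cr y b < cr z b) :
    0 ≤ cr (y - x) (z - y) ∧ (cr (y - x) (z - y) = 0 →
      ∃ ν ∈ N, dt ν ν = 1 ∧ dt (x - p) ν = 2 ∧ dt (y - p) ν = 2) := by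
  obtain ⟨ν, hN, hu, h2, hν, h1⟩ := S.supp hy
  have a1 := h1 x hx
  have a2 := h1 z hz
  have e : (cr z b - cr y b) * dt (x - y) ν + (cr y b - cr x b) * dt (z - y) ν
      = cr (y - x) (z - y) * dt ν b := by
    simp only [dt, cr, PiLp.sub_apply]
    ring
  have m1 : (cr z b - cr y b) * dt (x - y) ν ≤ 0 :=
    mul_nonpos_of_nonneg_of_nonpos (by linarith) a1
  have m2 : (cr y b - cr x b) * dt (z - y) ν ≤ 0 :=
    mul_nonpos_of_nonneg_of_nonpos (by linarith) a2
  refine ⟨?_, fun h => ⟨ν, hN, hu, ?_, h2⟩⟩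
  · by_contra hc
    push Not at hc
    have := mul_pos_of_neg_of_neg hc hν
    linarith
  · rw [h, zero_mul] at e
    have : (cr z b - cr y b) * dt (x - y) ν = 0 := by linarith
    rcases mul_eq_zero.1 this with h | h
    · linarith
    · simp only [dt, PiLp.sub_apply] at *
      linarith

theorem seg_infinite (S : Sys F N p b) (S' : Sys F' N' p' b') {x y : Pt} (hxy : x ≠ y)
    (hx : x ∈ F) (hy : y ∈ F) (hx' : x ∈ F') (hy' : y ∈ F')
    {ν μ : Pt} (hν : ν ∈ N) (uν : dt ν ν = 1) (h1 : dt (x - p) ν = 2) (h2 : dt (y - p) ν = 2)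
    (hμ : μ ∈ N') (uμ : dt μ μ = 1) (h1' : dt (x - p') μ = 2) (h2' : dt (y - p') μ = 2) :
    (F ∩ F').Infinite := by
  have hinf : (Set.Icc (0:ℝ) 1).Infinite := Set.Icc_infinite one_pos
  refine Set.infinite_of_injOn_mapsTo (f := fun t : ℝ => x + t • (y - x)) ?_ ?_ hinf
  · intro s _ t _ hst
    simp only [add_right_inj] at hst
    exact smul_left_injective ℝ (sub_ne_zero.2 hxy.symm) hst
  · intro t ht
    exact ⟨S.seg x hx y hy ν hν uν h1 h2 t ht.1 ht.2, S'.seg x hx' y hy' μ hμ uμ h1' h2' t ht.1 ht.2⟩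

theorem turn (S : Sys F N p b) (S' : Sys F' N' p' b') (hfin : (F ∩ F').Finite)
    {x y z : Pt} (hx : x ∈ F ∩ F') (hy : y ∈ F ∩ F') (hz : z ∈ F ∩ F')
    (hxy : cr x b < cr y b) (hyz : cr y b < cr z b) : 0 < cr (y - x) (z - y) := by
  obtain ⟨h0, h1⟩ := S.conv hx.1 hy.1 hz.1 hxy hyz
  refine lt_of_le_of_ne h0 fun h => ?_
  obtain ⟨ν, hN, hu, hν, hν'⟩ := h1 h.symm
  obtain ⟨μ, hM, hmu, hm2, -, h3⟩ := S'.supp hy.2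
  have a1 := h3 x hx.2
  have a2 := h3 z hz.2
  have e : (cr z b - cr y b) * dt (x - y) μ + (cr y b - cr x b) * dt (z - y) μ
      = cr (y - x) (z - y) * dt μ b := by
    simp only [dt, cr, PiLp.sub_apply]
    ring
  rw [← h, zero_mul] at e
  have hz : dt (x - y) μ = 0 := by
    have m1 : (cr z b - cr y b) * dt (x - y) μ ≤ 0 :=
      mul_nonpos_of_nonneg_of_nonpos (by linarith) a1
    have m2 : (cr y b - cr x b) * dt (z - y) μ ≤ 0 :=
      mul_nonpos_of_nonneg_of_nonpos (by linarith) a2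
    have s1 : dt (z - y) μ = 0 ∨ dt (z-y) μ < 0 := a2.eq_or_lt
    -- the middle point forces both products to vanish
    have : (cr z b - cr y b) * dt (x - y) μ = 0 := by linarith
    rcases mul_eq_zero.1 this with h | h
    · linarith
    · exact h
  refine seg_infinite S S' (x := x) (y := y) ?_ hx.1 hy.1 hx.2 hy.2 hN hu hν hν' hM hmu ?_ hm2 hfin
  · rintro rfl
    exact lt_irrefl _ hxy
  · simp only [dt, PiLp.sub_apply] at *
    linarith

theorem turn4 (S : Sys F N p b) (S' : Sys F' N' p' b') (hfin : (F ∩ F').Finite)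
    {x y z w : Pt} (hx : x ∈ F ∩ F') (hy : y ∈ F ∩ F') (hz : z ∈ F ∩ F') (hw : w ∈ F ∩ F')
    (hxy : cr x b < cr y b) (hyz : cr y b < cr z b) (hzw : cr z b < cr w b) :
    0 < cr (y - x) (w - z) := by
  have t1 := turn S S' hfin hx hy hz hxy hyz
  have t2 := turn S S' hfin hy hz hw hyz hzw
  have e : cr (y - x) (w - z) * (cr z b - cr y b) =
      cr (y - x) (z - y) * (cr w b - cr z b) + cr (z - y) (w - z) * (cr y b - cr x b) := by
    simp only [cr, PiLp.sub_apply]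
    ring
  have : 0 < cr (y - x) (w - z) * (cr z b - cr y b) := by
    rw [e]
    exact add_pos (mul_pos t1 (by linarith)) (mul_pos t2 (by linarith))
  exact pos_of_mul_pos_left this (by linarith)

theorem edge (S : Sys F N p b) {x y : Pt} (hx : x ∈ F) (hy : y ∈ F)
    (hxy : cr x b < cr y b) : nrm (y - x) ∈ N := by
  obtain ⟨ν, hν, -, -, nν, h1⟩ := S.supp hx
  obtain ⟨μ, hμ, -, -, nμ, h2⟩ := S.supp hy
  have a1 := h1 y hy
  have a2 := h2 x hx
  -- the combination of the two normals orthogonal to the edge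
  rcases eq_or_lt_of_le a1 with z | z
  · have hk : (cr x b - cr y b) / dt ν b > 0 := div_pos_of_neg_of_neg (by linarith) nν
    have hkk : (cr x b - cr y b) / dt ν b * dt ν b = cr x b - cr y b := div_mul_cancel₀ _ nν.ne
    have := S.cone ν hν ν hν ((cr x b - cr y b) / dt ν b) 0 hk.le le_rfl
    generalize (cr x b - cr y b) / dt ν b = k at *
    convert this using 1
    apply pt_ext
    · apply mul_left_cancel₀ nν.ne
      have e : dt ν b * nrm (y - x) 0 = (cr x b - cr y b) * ν 0 := by
        simp only [dt, cr, nrm, PiLp.sub_apply] at *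
        simp
        linear_combination b 1 * z
      simp only [PiLp.add_apply, PiLp.smul_apply, smul_eq_mul]
      linear_combination e - ν 0 * hkk
    · apply mul_left_cancel₀ nν.ne
      have e : dt ν b * nrm (y - x) 1 = (cr x b - cr y b) * ν 1 := by
        simp only [dt, cr, nrm, PiLp.sub_apply] at *
        simp
        linear_combination - b 0 * z
      simp only [PiLp.add_apply, PiLp.smul_apply, smul_eq_mul]
      linear_combination e - ν 1 * hkk
  · have hD : - dt (x - y) μ * dt ν b + - dt (y - x) ν * dt μ b < 0 := by
      have : - dt (x - y) μ * dt ν b ≤ 0 :=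
        mul_nonpos_of_nonneg_of_nonpos (by linarith) nν.le
      have : - dt (y - x) ν * dt μ b < 0 := mul_neg_of_pos_of_neg (by linarith) nμ
      linarith
    obtain ⟨D, hDdef⟩ : ∃ D, D = - dt (x - y) μ * dt ν b + - dt (y - x) ν * dt μ b := ⟨_, rfl⟩
    rw [← hDdef] at hD
    obtain ⟨k, hkdef⟩ : ∃ k, k = (cr x b - cr y b) / D := ⟨_, rfl⟩
    have hk : k > 0 := by rw [hkdef]; exact div_pos_of_neg_of_neg (by linarith) hD
    have hkk : k * D = cr x b - cr y b := by rw [hkdef]; exact div_mul_cancel₀ _ hD.ne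
    have := S.cone ν hν μ hμ (k * (- dt (x - y) μ)) (k * (- dt (y - x) ν))
      (mul_nonneg hk.le (by linarith)) (mul_nonneg hk.le (by linarith))
    convert this using 1
    apply pt_ext
    · apply mul_left_cancel₀ hD.ne
      have e : D * nrm (y - x) 0 =
          (cr x b - cr y b) * (- dt (x - y) μ * ν 0 + - dt (y - x) ν * μ 0) := by
        simp only [hDdef, dt, cr, nrm, PiLp.sub_apply]
        simp
        ring
      simp only [PiLp.add_apply, PiLp.smul_apply, smul_eq_mul]
      linear_combination e - (- dt (x - y) μ * ν 0 + - dt (y - x) ν * μ 0) * hkk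
    · apply mul_left_cancel₀ hD.ne
      have e : D * nrm (y - x) 1 =
          (cr x b - cr y b) * (- dt (x - y) μ * ν 1 + - dt (y - x) ν * μ 1) := by
        simp only [hDdef, dt, cr, nrm, PiLp.sub_apply]
        simp
        ring
      simp only [PiLp.add_apply, PiLp.smul_apply, smul_eq_mul]
      linear_combination e - (- dt (x - y) μ * ν 1 + - dt (y - x) ν * μ 1) * hkk

/-- A vector supporting at the middle point lies in the cone of the two edge normals. -/
theorem decomp {d e ν : Pt} (h : 0 < cr d e) (h1 : 0 ≤ dt d ν) (h2 : dt e ν ≤ 0) :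
    ∃ α β : ℝ, 0 ≤ α ∧ 0 ≤ β ∧ ν = α • nrm d + β • nrm e ∧ α * cr d e = - dt e ν ∧
      β * cr d e = dt d ν := by
  refine ⟨- dt e ν / cr d e, dt d ν / cr d e, div_nonneg (by linarith) h.le,
    div_nonneg h1 h.le, ?_, by field_simp, by field_simp⟩
  apply pt_ext
  · simp only [PiLp.add_apply, PiLp.smul_apply, smul_eq_mul]
    field_simp
    simp [dt, cr, nrm]
    ring
  · simp only [PiLp.add_apply, PiLp.smul_apply, smul_eq_mul]
    field_simp
    simp [dt, cr, nrm]
    ring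

theorem arc_infinite (S : Sys F N p b) (S' : Sys F' N' p b') {A B : Pt} (h : cr A B ≠ 0)
    (hA : A ∈ N) (hB : B ∈ N) (hA' : A ∈ N') (hB' : B ∈ N') : (F ∩ F').Infinite := by
  have hinf : (Set.Icc (0:ℝ) 1).Infinite := Set.Icc_infinite one_pos
  let m : ℝ → Pt := fun t => (1 - t) • A + t • B
  have hm : ∀ t, m t = (1 - t) • A + t • B := fun _ => rfl
  have hpos : ∀ t, 0 < dt (m t) (m t) := by
    intro t
    by_contra hc
    have h0 : m t 0 = 0 := by simp only [dt] at hc; nlinarith [sq_nonneg (m t 0), sq_nonneg (m t 1)]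
    have h1 : m t 1 = 0 := by simp only [dt] at hc; nlinarith [sq_nonneg (m t 0), sq_nonneg (m t 1)]
    apply h
    simp only [hm, PiLp.add_apply, PiLp.smul_apply, smul_eq_mul] at h0 h1
    have e1 : (1 - t) * cr A B = 0 := by
      simp only [cr]; linear_combination B 1 * h0 - B 0 * h1
    have e2 : t * cr A B = 0 := by
      simp only [cr]; linear_combination A 0 * h1 - A 1 * h0
    linarith
  let r : ℝ → ℝ := fun t => (Real.sqrt (dt (m t) (m t)))⁻¹
  have hr : ∀ t, 0 < r t := fun t => inv_pos.2 (Real.sqrt_pos.2 (hpos t))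
  have hr2 : ∀ t, r t * r t * dt (m t) (m t) = 1 := by
    intro t
    have := Real.mul_self_sqrt (hpos t).le
    have h3 := (Real.sqrt_pos.2 (hpos t)).ne'
    simp only [r]
    rw [← mul_inv, this]
    exact inv_mul_cancel₀ (hpos t).ne'
  have hunit : ∀ t, dt (r t • m t) (r t • m t) = 1 := by
    intro t
    rw [← hr2 t]
    simp only [dt, PiLp.smul_apply, smul_eq_mul]
    ring
  refine Set.infinite_of_injOn_mapsTo (f := fun t : ℝ => p + (2:ℝ) • (r t • m t)) ?_ ?_ hinf
  · intro s _ t _ hst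
    simp only [add_right_inj] at hst
    have h0 := congrArg (fun v : Pt => v 0) hst
    have h1 := congrArg (fun v : Pt => v 1) hst
    simp only [hm, PiLp.add_apply, PiLp.smul_apply, smul_eq_mul] at h0 h1
    have e : (r s * r t) * ((t - s) * cr A B) = 0 := by
      simp only [cr]
      linear_combination (r t / 2 * ((1 - t) * A 1 + t * B 1)) * h0
        - (r t / 2 * ((1 - t) * A 0 + t * B 0)) * h1
    have := (mul_eq_zero.1 e).resolve_left (mul_pos (hr s) (hr t)).ne'
    have := (mul_eq_zero.1 this).resolve_right h
    linarith
  · intro t ht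
    have c : r t • m t = (r t * (1 - t)) • A + (r t * t) • B := by
      simp only [hm, smul_add, smul_smul]
    have n1 : 0 ≤ r t * (1 - t) := mul_nonneg (hr t).le (by linarith [ht.2])
    have n2 : 0 ≤ r t * t := mul_nonneg (hr t).le ht.1
    refine ⟨S.arc _ ?_ (hunit t), S'.arc _ ?_ (hunit t)⟩
    · rw [c]; exact S.cone A hA B hB _ _ n1 n2
    · rw [c]; exact S'.cone A hA' B hB' _ _ n1 n2

end Sys

namespace Sys

variable {F N F' N' : Set Pt} {p b q b' : Pt}

theorem middle (S : Sys F N p b) (S' : Sys F' N' q b') (hfin : (F ∩ F').Finite)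
    {x y z : Pt} (hx : x ∈ F ∩ F') (hy : y ∈ F ∩ F') (hz : z ∈ F ∩ F')
    (hxy : cr x b < cr y b) (hyz : cr y b < cr z b)
    (hxy' : cr x b' < cr y b') (hyz' : cr y b' < cr z b') :
    ∃ ν ∈ N, dt ν ν = 1 ∧ dt (y - p) ν = 2 ∧ ∃ α β : ℝ, 0 ≤ α ∧ 0 ≤ β ∧ (0 < α ∨ 0 < β) ∧
      (α = 0 → dt (z - y) ν = 0) ∧ (β = 0 → dt (y - x) ν = 0) ∧
      α * dt (p - q) (nrm (y - x)) + β * dt (p - q) (nrm (z - y)) ≤ 0 := by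
  have t := turn S S' hfin hx hy hz hxy hyz
  obtain ⟨ν, hν, hu, h2, -, h3⟩ := S.supp hy.1
  have a1 := h3 x hx.1
  have a2 := h3 z hz.1
  obtain ⟨α, β, hα, hβ, e, e1, e2⟩ := decomp (ν := ν) t
    (by simp only [dt, PiLp.sub_apply] at *; linarith) a2
  refine ⟨ν, hν, hu, h2, α, β, hα, hβ, ?_, ?_, ?_, ?_⟩
  · by_contra hc
    push Not at hc
    have h0 : α = 0 := le_antisymm hc.1 hα
    have h1 : β = 0 := le_antisymm hc.2 hβ
    apply ne_zero_of_unit hu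
    rw [e, h0, h1]
    simp
  · intro h
    rw [h] at e1
    linarith
  · intro h
    rw [h] at e2
    linarith
  · have hν' : ν ∈ N' := by
      rw [e]
      exact S'.cone _ (S'.edge hx.2 hy.2 hxy') _ (S'.edge hy.2 hz.2 hyz') _ _ hα hβ
    have h4 := S'.le y hy.2 ν hν' hu
    have h5 : dt (p - q) ν ≤ 0 := by
      simp only [dt, PiLp.sub_apply] at *
      linarith
    have h6 : dt (p - q) ν = α * dt (p - q) (nrm (y - x)) + β * dt (p - q) (nrm (z - y)) := by
      conv_lhs => rw [e]
      simp only [dt, PiLp.add_apply, PiLp.smul_apply, smul_eq_mul]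
      ring
    linarith

theorem core (S : Sys F N p b) (S' : Sys F' N' q b') (hfin : (F ∩ F').Finite)
    {x y z w : Pt} (hx : x ∈ F ∩ F') (hy : y ∈ F ∩ F') (hz : z ∈ F ∩ F') (hw : w ∈ F ∩ F')
    (hxy : cr x b < cr y b) (hyz : cr y b < cr z b) (hzw : cr z b < cr w b)
    (hxy' : cr x b' < cr y b') (hyz' : cr y b' < cr z b') (hzw' : cr z b' < cr w b') : False := by
  have tAB := turn S S' hfin hx hy hz hxy hyz
  have tBC := turn S S' hfin hy hz hw hyz hzw
  have tAC := turn4 S S' hfin hx hy hz hw hxy hyz hzw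
  have hfin' : (F' ∩ F).Finite := by rwa [Set.inter_comm]
  have hyz_ne : y ≠ z := by rintro rfl; exact lt_irrefl _ hyz
  obtain ⟨ν, hν, uν, sν, α, β, hα, hβ, hαβ, zα, zβ, f1⟩ :=
    middle S S' hfin hx hy hz hxy hyz hxy' hyz'
  obtain ⟨ν₂, hν₂, uν₂, sν₂, α₂, β₂, hα₂, hβ₂, hαβ₂, zα₂, zβ₂, f2⟩ :=
    middle S S' hfin hy hz hw hyz hzw hyz' hzw'
  obtain ⟨μ, hμ, uμ, sμ, γ, δ, hγ, hδ, hγδ, zγ, zδ, g1⟩ :=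
    middle S' S hfin' hx.symm hy.symm hz.symm hxy' hyz' hxy hyz
  obtain ⟨μ₂, hμ₂, uμ₂, sμ₂, γ₂, δ₂, hγ₂, hδ₂, hγδ₂, zγ₂, zδ₂, g2⟩ :=
    middle S' S hfin' hy.symm hz.symm hw.symm hyz' hzw' hyz hzw
  have flip : ∀ n : Pt, dt (q - p) n = - dt (p - q) n := by
    intro n
    simp only [dt, PiLp.sub_apply]
    ring
  rw [flip, flip] at g1 g2
  have lin : cr (y - x) (w - z) * dt (p - q) (nrm (z - y)) =
      cr (z - y) (w - z) * dt (p - q) (nrm (y - x)) +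
      cr (y - x) (z - y) * dt (p - q) (nrm (w - z)) := by
    simp only [cr, dt, nrm, PiLp.sub_apply]
    simp
    ring
  obtain ⟨a, ha⟩ : ∃ a, a = dt (p - q) (nrm (y - x)) := ⟨_, rfl⟩
  obtain ⟨e, he⟩ : ∃ e, e = dt (p - q) (nrm (z - y)) := ⟨_, rfl⟩
  obtain ⟨c, hc⟩ : ∃ c, c = dt (p - q) (nrm (w - z)) := ⟨_, rfl⟩
  rw [← ha, ← he] at f1 g1
  rw [← he, ← hc] at f2 g2
  rw [← ha, ← he, ← hc] at lin
  have key : ∀ α β a e : ℝ, 0 ≤ α → 0 ≤ β → (0 < α ∨ 0 < β) → 0 < a → 0 < e →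
      α * a + β * e ≤ 0 → False := by
    intro α β a e h1 h2 h3 h4 h5 h6
    have m1 := mul_nonneg h1 h4.le
    have m2 := mul_nonneg h2 h5.le
    rcases h3 with h3 | h3
    · have := mul_pos h3 h4
      linarith
    · have := mul_pos h3 h5
      linarith
  rcases lt_trichotomy e 0 with he0 | he0 | he0
  · have h1 : 0 ≤ a := by
      by_contra hn
      exact key γ δ (-a) (-e) hγ hδ hγδ (by linarith) (by linarith) (by linarith)
    have h2 : 0 ≤ c := by
      by_contra hn
      exact key γ₂ δ₂ (-e) (-c) hγ₂ hδ₂ hγδ₂ (by linarith) (by linarith) (by linarith)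
    have := mul_nonneg tBC.le h1
    have := mul_nonneg tAB.le h2
    have := mul_neg_of_pos_of_neg tAC he0
    linarith
  · rw [he0] at f1 f2 g1 g2 lin
    rcases lt_trichotomy a 0 with ha0 | ha0 | ha0
    · have hc0 : 0 < c := by
        by_contra hn
        have := mul_neg_of_pos_of_neg tBC ha0
        have := mul_nonpos_of_nonneg_of_nonpos tAB.le (not_lt.1 hn)
        linarith
      have k1 : γ = 0 := by
        by_contra hn
        have := mul_neg_of_pos_of_neg (lt_of_le_of_ne hγ (Ne.symm hn)) ha0
        linarith
      have k2 : β₂ = 0 := by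
        by_contra hn
        have := mul_pos (lt_of_le_of_ne hβ₂ (Ne.symm hn)) hc0
        linarith
      have l1 := zγ k1
      have l2 := zβ₂ k2
      refine seg_infinite S S' hyz_ne hy.1 hz.1 hy.2 hz.2 hν₂ uν₂ ?_ sν₂ hμ uμ sμ ?_ hfin
      · simp only [dt, PiLp.sub_apply] at *
        linarith
      · simp only [dt, PiLp.sub_apply] at *
        linarith
    · have hpq : p = q := by
        have h0 : (p - q) 0 * cr (y - x) (z - y) = 0 := by
          rw [ha0] at ha
          rw [he0] at he
          simp only [cr, dt, nrm, PiLp.sub_apply] at *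
          simp at ha he
          linear_combination  (z 0 - y 0) * ha - (y 0 - x 0) * he
        have h1 : (p - q) 1 * cr (y - x) (z - y) = 0 := by
          rw [ha0] at ha
          rw [he0] at he
          simp only [cr, dt, nrm, PiLp.sub_apply] at *
          simp at ha he
          linear_combination (z 1 - y 1) * ha - (y 1 - x 1) * he
        have h0 := (mul_eq_zero.1 h0).resolve_right tAB.ne'
        have h1 := (mul_eq_zero.1 h1).resolve_right tAB.ne'
        apply pt_ext
        · simpa [sub_eq_zero] using h0
        · simpa [sub_eq_zero] using h1
      subst hpq
      refine arc_infinite S S' (A := nrm (y - x)) (B := nrm (z - y)) ?_ (S.edge hx.1 hy.1 hxy)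
        (S.edge hy.1 hz.1 hyz) (S'.edge hx.2 hy.2 hxy') (S'.edge hy.2 hz.2 hyz') hfin
      have : cr (nrm (y - x)) (nrm (z - y)) = cr (y - x) (z - y) := by
        simp only [cr, nrm, PiLp.sub_apply]
        simp
        ring
      rw [this]
      exact tAB.ne'
    · have hc0 : c < 0 := by
        by_contra hn
        have := mul_pos tBC ha0
        have := mul_nonneg tAB.le (not_lt.1 hn)
        linarith
      have k1 : α = 0 := by
        by_contra hn
        have := mul_pos (lt_of_le_of_ne hα (Ne.symm hn)) ha0
        linarith
      have k2 : δ₂ = 0 := by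
        by_contra hn
        have := mul_neg_of_pos_of_neg (lt_of_le_of_ne hδ₂ (Ne.symm hn)) hc0
        linarith
      have l1 := zα k1
      have l2 := zδ₂ k2
      refine seg_infinite S S' hyz_ne hy.1 hz.1 hy.2 hz.2 hν uν sν ?_ hμ₂ uμ₂ ?_ sμ₂ hfin
      · simp only [dt, PiLp.sub_apply] at *
        linarith
      · simp only [dt, PiLp.sub_apply] at *
        linarith
  · have h1 : a ≤ 0 := by
      by_contra hn
      exact key α β a e hα hβ hαβ (by linarith) (by linarith) (by linarith)
    have h2 : c ≤ 0 := by
      by_contra hn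
      exact key α₂ β₂ e c hα₂ hβ₂ hαβ₂ (by linarith) (by linarith) (by linarith)
    have := mul_nonpos_of_nonneg_of_nonpos tBC.le h1
    have := mul_nonpos_of_nonneg_of_nonpos tAB.le h2
    have := mul_pos tAC he0
    linarith

theorem five (S : Sys F N p b) (S' : Sys F' N' q b') (hfin : (F ∩ F').Finite)
    (x : Fin 5 → Pt) (hx : ∀ i, x i ∈ F ∩ F') (hs : ∀ i j, i < j → cr (x i) b < cr (x j) b) :
    False := by
  have hfin' : (F' ∩ F).Finite := by rwa [Set.inter_comm]
  have hx' : ∀ i, x i ∈ F' ∩ F := fun i => (hx i).symm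
  have ne : ∀ i j, i < j → cr (x i) b' ≠ cr (x j) b' := by
    intro i j hij h
    have := S'.inj (hx i).2 (hx j).2 h
    have h2 := hs i j hij
    rw [this] at h2
    exact lt_irrefl _ h2
  have tr : ∀ i j k, i < j → j < k →
      ¬ (cr (x i) b' < cr (x k) b' ∧ cr (x k) b' < cr (x j) b') ∧
      ¬ (cr (x j) b' < cr (x i) b' ∧ cr (x i) b' < cr (x k) b') ∧
      ¬ (cr (x k) b' < cr (x j) b' ∧ cr (x j) b' < cr (x i) b') := by
    intro i j k hij hjk
    have t := turn S S' hfin (hx i) (hx j) (hx k) (hs _ _ hij) (hs _ _ hjk)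
    refine ⟨?_, ?_, ?_⟩
    · rintro ⟨h1, h2⟩
      have t' := turn S' S hfin' (hx' i) (hx' k) (hx' j) h1 h2
      simp only [cr, PiLp.sub_apply] at *
      linarith
    · rintro ⟨h1, h2⟩
      have t' := turn S' S hfin' (hx' j) (hx' i) (hx' k) h1 h2
      simp only [cr, PiLp.sub_apply] at *
      linarith
    · rintro ⟨h1, h2⟩
      have t' := turn S' S hfin' (hx' k) (hx' j) (hx' i) h1 h2
      simp only [cr, PiLp.sub_apply] at *
      linarith
  have rot : ∀ i j k l, i < j → j < k → k < l →
      ¬ (cr (x k) b' < cr (x l) b' ∧ cr (x l) b' < cr (x i) b' ∧ cr (x i) b' < cr (x j) b') := by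
    rintro i j k l hij hjk hkl ⟨h1, h2, h3⟩
    have t := turn4 S S' hfin (hx i) (hx j) (hx k) (hx l) (hs _ _ hij) (hs _ _ hjk) (hs _ _ hkl)
    have t' := turn4 S' S hfin' (hx' k) (hx' l) (hx' i) (hx' j) h1 h2 h3
    simp only [cr, PiLp.sub_apply] at *
    linarith
  have cor : ∀ i j k l, i < j → j < k → k < l →
      ¬ (cr (x i) b' < cr (x j) b' ∧ cr (x j) b' < cr (x k) b' ∧ cr (x k) b' < cr (x l) b') := by
    rintro i j k l hij hjk hkl ⟨h1, h2, h3⟩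
    exact core S S' hfin (hx i) (hx j) (hx k) (hx l) (hs _ _ hij) (hs _ _ hjk) (hs _ _ hkl) h1 h2 h3
  have c1 := cor 0 1 2 3 (by decide) (by decide) (by decide)
  have c2 := cor 1 2 3 4 (by decide) (by decide) (by decide)
  have r1 := rot 0 1 2 3 (by decide) (by decide) (by decide)
  have r2 := rot 0 1 3 4 (by decide) (by decide) (by decide)
  have n01 := lt_or_gt_of_ne (ne 0 1 (by decide))
  have n02 := lt_or_gt_of_ne (ne 0 2 (by decide))
  have n03 := lt_or_gt_of_ne (ne 0 3 (by decide))
  have n12 := lt_or_gt_of_ne (ne 1 2 (by decide))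
  have n13 := lt_or_gt_of_ne (ne 1 3 (by decide))
  have n14 := lt_or_gt_of_ne (ne 1 4 (by decide))
  have n23 := lt_or_gt_of_ne (ne 2 3 (by decide))
  have n24 := lt_or_gt_of_ne (ne 2 4 (by decide))
  have n34 := lt_or_gt_of_ne (ne 3 4 (by decide))
  have n04 := lt_or_gt_of_ne (ne 0 4 (by decide))
  have t012 := tr 0 1 2 (by decide) (by decide)
  have t013 := tr 0 1 3 (by decide) (by decide)
  have t014 := tr 0 1 4 (by decide) (by decide)
  have t023 := tr 0 2 3 (by decide) (by decide)
  have t024 := tr 0 2 4 (by decide) (by decide)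
  have t034 := tr 0 3 4 (by decide) (by decide)
  have t123 := tr 1 2 3 (by decide) (by decide)
  have t124 := tr 1 2 4 (by decide) (by decide)
  have t134 := tr 1 3 4 (by decide) (by decide)
  have t234 := tr 2 3 4 (by decide) (by decide)
  clear tr rot cor ne
  generalize cr (x 0) b' = f0 at *
  generalize cr (x 1) b' = f1 at *
  generalize cr (x 2) b' = f2 at *
  generalize cr (x 3) b' = f3 at *
  generalize cr (x 4) b' = f4 at *
  clear hs hx hx' S S' hfin hfin'
  grind

theorem card_le (S : Sys F N p b) (S' : Sys F' N' q b') (hfin : (F ∩ F').Finite) :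
    (F ∩ F').ncard ≤ 4 := by
  by_contra hc
  push Not at hc
  obtain ⟨T, hT, hcard⟩ := Set.exists_subset_card_eq (s := F ∩ F') (n := 5) (by omega)
  have hTfin : T.Finite := hfin.subset hT
  have hinj : Set.InjOn (fun v : Pt => cr v b) T := fun v hv v' hv' h =>
    S.inj (hT hv).1 (hT hv').1 h
  let I : Set ℝ := (fun v : Pt => cr v b) '' T
  have hI : I.Finite := hTfin.image _
  have hIc : hI.toFinset.card = 5 := by
    rw [← Set.ncard_eq_toFinset_card I hI, ← hcard]
    exact Set.ncard_image_of_injOn hinj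
  let o := hI.toFinset.orderEmbOfFin hIc
  have ho : ∀ i, ∃ v ∈ T, cr v b = o i := by
    intro i
    have := hI.toFinset.orderEmbOfFin_mem hIc i
    rw [Set.Finite.mem_toFinset] at this
    exact this
  choose x hx1 hx2 using ho
  refine five S S' hfin x (fun i => hT (hx1 i)) fun i j hij => ?_
  rw [hx2, hx2]
  exact o.strictMono hij

end Sys

theorem inner_eq_dt (x y : Pt) : inner ℝ x y = dt x y := by
  simp [dt, PiLp.inner_apply, Fin.sum_univ_two, mul_comm]

theorem norm_sq_eq_dt (x : Pt) : ‖x‖ ^ 2 = dt x x := by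
  rw [← real_inner_self_eq_norm_sq, inner_eq_dt]

theorem cr_ne_zero {u₁ u₂ : Pt} (hu : LinearIndependent ℝ ![u₁, u₂]) : cr u₁ u₂ ≠ 0 := by
  intro h
  rw [LinearIndependent.pair_iff] at hu
  have h0 := hu (u₂ 0) (-u₁ 0) (by
    apply pt_ext
    · simp; ring
    · simp only [cr, PiLp.add_apply, PiLp.smul_apply, smul_eq_mul, PiLp.zero_apply] at *; linarith)
  have h1 := hu (u₂ 1) (-u₁ 1) (by
    apply pt_ext
    · simp only [cr, PiLp.add_apply, PiLp.smul_apply, smul_eq_mul, PiLp.zero_apply] at *; linarith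
    · simp; ring)
  have z : u₁ = 0 := pt_ext (by simpa using h0.2) (by simpa using h1.2)
  have := hu 1 0 (by simp [z])
  exact one_ne_zero this.1

theorem wedge_eq {u₁ u₂ : Pt} (h : cr u₁ u₂ ≠ 0) (p : Pt) :
    {x : Pt | ∃ α β : ℝ, 0 ≤ α ∧ 0 ≤ β ∧ x = p + α • u₁ + β • u₂} =
    {x : Pt | 0 ≤ cr (x - p) u₂ / cr u₁ u₂ ∧ 0 ≤ cr u₁ (x - p) / cr u₁ u₂} := by
  ext x
  constructor
  · rintro ⟨α, β, hα, hβ, rfl⟩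
    have e1 : cr (p + α • u₁ + β • u₂ - p) u₂ = α * cr u₁ u₂ := by
      simp [cr]; ring
    have e2 : cr u₁ (p + α • u₁ + β • u₂ - p) = β * cr u₁ u₂ := by
      simp [cr]; ring
    refine ⟨?_, ?_⟩
    · rw [e1, mul_div_cancel_right₀ _ h]; exact hα
    · rw [e2, mul_div_cancel_right₀ _ h]; exact hβ
  · rintro ⟨h1, h2⟩
    refine ⟨_, _, h1, h2, ?_⟩
    apply pt_ext
    · simp only [PiLp.add_apply, PiLp.smul_apply, smul_eq_mul]
      field_simp
      simp [cr]
      ring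
    · simp only [PiLp.add_apply, PiLp.smul_apply, smul_eq_mul]
      field_simp
      simp [cr]
      ring

theorem wedge_sys {u₁ u₂ : Pt} (hu : LinearIndependent ℝ ![u₁, u₂]) (p : Pt) (W : Set Pt)
    (hW : W = {x : Pt | ∃ α β : ℝ, 0 ≤ α ∧ 0 ≤ β ∧ x = p + α • u₁ + β • u₂}) :
    Sys (frontier (W + closedBall (0 : Pt) 2)) {n | dt n u₁ ≤ 0 ∧ dt n u₂ ≤ 0} p (u₁ + u₂) := by
  have hcr := cr_ne_zero hu
  have hWc : IsClosed W := by
    rw [hW, wedge_eq hcr]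
    simp only [cr, Set.ofPred_and]
    refine IsClosed.inter ?_ ?_
    · exact isClosed_le continuous_const (by fun_prop)
    · exact isClosed_le continuous_const (by fun_prop)
  have hmem : ∀ x, x ∈ W ↔ ∃ α β : ℝ, 0 ≤ α ∧ 0 ≤ β ∧ x = p + α • u₁ + β • u₂ := by
    intro x; rw [hW]; rfl
  have hpW : p ∈ W := (hmem p).2 ⟨0, 0, le_rfl, le_rfl, by simp⟩
  have hWconv : Convex ℝ W := by
    intro x hx y hy s t hs ht hst
    obtain ⟨α, β, h1, h2, rfl⟩ := (hmem x).1 hx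
    obtain ⟨γ, δ, h3, h4, rfl⟩ := (hmem y).1 hy
    refine (hmem _).2 ⟨s * α + t * γ, s * β + t * δ, by positivity, by positivity, ?_⟩
    have : s = 1 - t := by linarith
    subst this
    module
  have hKc : IsClosed (W + closedBall (0 : Pt) 2) :=
    hWc.add_right_of_isCompact (isCompact_closedBall 0 2)
  have hKconv : Convex ℝ (W + closedBall (0 : Pt) 2) := hWconv.add (convex_closedBall 0 2)
  have hKmem : ∀ x, x ∈ W + closedBall (0 : Pt) 2 ↔ ∃ w ∈ W, ‖x - w‖ ≤ 2 := by
    intro x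
    rw [Set.mem_add]
    constructor
    · rintro ⟨w, hw, e, he, rfl⟩
      refine ⟨w, hw, ?_⟩
      simpa using he
    · rintro ⟨w, hw, h⟩
      exact ⟨w, hw, x - w, by simpa using h, by simp⟩
  have hle : ∀ x ∈ W + closedBall (0 : Pt) 2, ∀ n : Pt, dt n u₁ ≤ 0 ∧ dt n u₂ ≤ 0 →
      dt n n = 1 → dt (x - p) n ≤ 2 := by
    intro x hx n hn hn1
    obtain ⟨w, hw, h⟩ := (hKmem x).1 hx
    obtain ⟨α, β, h1, h2, rfl⟩ := (hmem w).1 hw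
    have hnn : ‖n‖ = 1 := by
      have := norm_sq_eq_dt n
      rw [hn1] at this
      nlinarith [norm_nonneg n]
    have hcs := real_inner_le_norm (x - (p + α • u₁ + β • u₂)) n
    rw [inner_eq_dt, hnn, mul_one] at hcs
    have m1 := mul_nonpos_of_nonneg_of_nonpos h1 hn.1
    have m2 := mul_nonpos_of_nonneg_of_nonpos h2 hn.2
    have : dt (x - p) n = dt (x - (p + α • u₁ + β • u₂)) n + α * dt n u₁ + β * dt n u₂ := by
      simp [dt]; ring
    linarith
  -- points of the set attaining the support value are on the boundary
  have hfr : ∀ x ∈ W + closedBall (0 : Pt) 2, ∀ n : Pt, dt n u₁ ≤ 0 ∧ dt n u₂ ≤ 0 →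
      dt n n = 1 → dt (x - p) n = 2 → x ∈ frontier (W + closedBall (0 : Pt) 2) := by
    intro x hx n hn hn1 hxn
    rw [hKc.frontier_eq]
    refine ⟨hx, fun hi => ?_⟩
    rw [mem_interior_iff_mem_nhds, Metric.mem_nhds_iff] at hi
    obtain ⟨ε, hε, hb⟩ := hi
    have hnn : ‖n‖ = 1 := by
      have := norm_sq_eq_dt n
      rw [hn1] at this
      nlinarith [norm_nonneg n]
    have hy : x + (ε / 2) • n ∈ W + closedBall (0 : Pt) 2 := by
      apply hb
      rw [mem_ball, dist_eq_norm, add_sub_cancel_left, norm_smul, hnn, mul_one,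
        Real.norm_of_nonneg (by linarith)]
      linarith
    have := hle _ hy n hn hn1
    have e : dt (x + (ε / 2) • n - p) n = dt (x - p) n + ε / 2 * dt n n := by
      simp [dt]; ring
    rw [e, hxn, hn1] at this
    linarith
  refine ⟨?_, ?_, ?_, ?_, ?_, ?_⟩
  · rintro n ⟨n1, n2⟩ m ⟨m1, m2⟩ α β hα hβ
    have a1 := mul_nonpos_of_nonneg_of_nonpos hα n1
    have a2 := mul_nonpos_of_nonneg_of_nonpos hα n2
    have a3 := mul_nonpos_of_nonneg_of_nonpos hβ m1
    have a4 := mul_nonpos_of_nonneg_of_nonpos hβ m2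
    constructor
    · have : dt (α • n + β • m) u₁ = α * dt n u₁ + β * dt m u₁ := by simp [dt]; ring
      linarith
    · have : dt (α • n + β • m) u₂ = α * dt n u₂ + β * dt m u₂ := by simp [dt]; ring
      linarith
  · rintro n ⟨n1, n2⟩ hn
    have e : dt n (u₁ + u₂) = dt n u₁ + dt n u₂ := by simp [dt]; ring
    by_contra hc
    have z1 : dt n u₁ = 0 := by linarith
    have z2 : dt n u₂ = 0 := by linarith
    apply hn
    apply pt_ext
    · apply mul_left_cancel₀ hcr
      simp only [dt, cr, PiLp.zero_apply] at *
      linear_combination u₂ 1 * z1 - u₁ 1 * z2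
    · apply mul_left_cancel₀ hcr
      simp only [dt, cr, PiLp.zero_apply] at *
      linear_combination - u₂ 0 * z1 + u₁ 0 * z2
  · intro x hx
    have hx' := hx
    rw [hKc.frontier_eq] at hx'
    obtain ⟨w, hw, hmin⟩ := exists_norm_eq_iInf_of_complete_convex ⟨p, hpW⟩ hWc.isComplete hWconv x
    have hpr := (norm_eq_iInf_iff_real_inner_le_zero hWconv hw).1 hmin
    have h2 : ‖x - w‖ = 2 := by
      apply le_antisymm
      · obtain ⟨w', hw', h'⟩ := (hKmem x).1 hx'.1
        refine le_trans ?_ h'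
        rw [hmin]
        exact ciInf_le ⟨0, by rintro _ ⟨y, rfl⟩; exact norm_nonneg _⟩ (⟨w', hw'⟩ : W)
      · by_contra hlt
        push Not at hlt
        apply hx'.2
        rw [mem_interior_iff_mem_nhds, Metric.mem_nhds_iff]
        refine ⟨2 - ‖x - w‖, by linarith, fun y hy => (hKmem y).2 ⟨w, hw, ?_⟩⟩
        rw [mem_ball, dist_eq_norm] at hy
        have := norm_add_le (y - x) (x - w)
        rw [sub_add_sub_cancel] at this
        linarith
    have hpr' : ∀ y ∈ W, dt (x - w) (y - w) ≤ 0 := fun y hy => by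
      rw [← inner_eq_dt]; exact hpr y hy
    obtain ⟨α, β, hα, hβ, hwe⟩ := (hmem w).1 hw
    have k1 := hpr' (w + u₁) ((hmem _).2 ⟨α + 1, β, by linarith, hβ, by rw [hwe]; module⟩)
    have k2 := hpr' (w + u₂) ((hmem _).2 ⟨α, β + 1, hα, by linarith, by rw [hwe]; module⟩)
    have k3 := hpr' p hpW
    have k4 := hpr' (w + (w - p)) ((hmem _).2 ⟨α + α, β + β, by linarith, by linarith,
      by rw [hwe]; module⟩)
    have k5 := norm_sq_eq_dt (x - w)
    rw [h2] at k5
    refine ⟨(1 / 2 : ℝ) • (x - w), ⟨?_, ?_⟩, ?_, ?_⟩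
    all_goals
      simp only [dt, PiLp.add_apply, PiLp.sub_apply, PiLp.smul_apply, smul_eq_mul] at *
      linarith
  · intro x hx n hn hn1
    exact hle x (hKc.frontier_subset hx) n hn hn1
  · intro x hx y hy n hn hn1 h1 h2 t ht0 ht1
    refine hfr _ ?_ n hn hn1 ?_
    · exact hKconv.add_smul_sub_mem (hKc.frontier_subset hx) (hKc.frontier_subset hy) ⟨ht0, ht1⟩
    · have : dt (x + t • (y - x) - p) n = (1 - t) * dt (x - p) n + t * dt (y - p) n := by
        simp [dt]; ring
      rw [this, h1, h2]
      ring
  · intro n hn hn1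
    have hnn : ‖n‖ = 1 := by
      have := norm_sq_eq_dt n
      rw [hn1] at this
      nlinarith [norm_nonneg n]
    refine hfr _ ((hKmem _).2 ⟨p, hpW, ?_⟩) n hn hn1 ?_
    · rw [add_sub_cancel_left, norm_smul, hnn]
      norm_num
    · have : dt (p + (2:ℝ) • n - p) n = 2 * dt n n := by simp [dt]; ring
      rw [this, hn1]
      norm_num

/-- The boundaries of two closed convex wedges expanded (Minkowski sum) by a
closed disc of radius 2 intersect either in infinitely many points or in at
most four points. -/
theorem stmt6 (u₁ u₂ w₁ w₂ : Pt) (hu : LinearIndependent ℝ ![u₁, u₂])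
    (hw : LinearIndependent ℝ ![w₁, w₂]) (p q : Pt) (W₁ W₂ : Set Pt)
    (hW₁ : W₁ = {x : Pt | ∃ α β : ℝ, 0 ≤ α ∧ 0 ≤ β ∧ x = p + α • u₁ + β • u₂})
    (hW₂ : W₂ = {x : Pt | ∃ α β : ℝ, 0 ≤ α ∧ 0 ≤ β ∧ x = q + α • w₁ + β • w₂}) :
    (frontier (W₁ + closedBall (0 : Pt) 2) ∩ frontier (W₂ + closedBall (0 : Pt) 2)).Infinite ∨
      (frontier (W₁ + closedBall (0 : Pt) 2) ∩ frontier (W₂ + closedBall (0 : Pt) 2)).ncard ≤ 4 := by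
  by_cases h : (frontier (W₁ + closedBall (0 : Pt) 2) ∩
      frontier (W₂ + closedBall (0 : Pt) 2)).Finite
  · exact Or.inr ((wedge_sys hu p W₁ hW₁).card_le (wedge_sys hw q W₂ hW₂) h)
  · exact Or.inl h
end

section
/- Let p₁, p₂, q be points of a real inner product space (e.g. ℝ²) such that dist(q, p₁) ≥ 2, dist(q, p₂) ≥ 2, and q lies in the closed diametral disc of p₁ and p₂, i.e., dist(q, midpoint(p₁,p₂)) ≤ dist(p₁,p₂)/2. Then dist(p₁, p₂) ≥ 2√2. -/
/-- If `q` is at distance at least 2 from both `p₁` and `p₂` and lies in the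
closed diametral disc of `p₁` and `p₂`, then `dist p₁ p₂ ≥ 2√2`. -/
theorem stmt10 {E : Type*} [NormedAddCommGroup E] [InnerProductSpace ℝ E]
    (p₁ p₂ q : E) (h₁ : 2 ≤ dist q p₁) (h₂ : 2 ≤ dist q p₂)
    (hq : dist q (midpoint ℝ p₁ p₂) ≤ dist p₁ p₂ / 2) :
    2 * Real.sqrt 2 ≤ dist p₁ p₂ := by
  have key := EuclideanGeometry.dist_sq_add_dist_sq_eq_two_mul_dist_midpoint_sq_add_half_dist_sq
    q p₁ p₂
  have hm : dist q (midpoint ℝ p₁ p₂) ^ 2 ≤ (dist p₁ p₂ / 2) ^ 2 :=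
    pow_le_pow_left₀ dist_nonneg hq 2
  have h8 : 8 ≤ dist p₁ p₂ ^ 2 := by nlinarith
  refine (pow_le_pow_iff_left₀ (by positivity) dist_nonneg two_ne_zero).1 ?_
  rw [mul_pow, Real.sq_sqrt (by norm_num)]
  linarith
end

section
/- Let C ⊆ ℝ² be a closed convex cone with 0 ∈ C, and let δ ∈ ℝ² with δ ≠ 0 and δ ∉ C. Then for all p, q ∈ ℝ² and all r ≥ 0, the set {t ∈ ℝ : t ≥ 0 ∧ p + t • δ ∈ (q + C) + closedBall(0, r)} is bounded above. In other words, a ray in a direction not belonging to the cone C eventually exits, and never re-enters, the expansion by radius r of any translate of C. -/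
open Metric Pointwise

/-- A ray in a direction `δ` not belonging to a closed convex cone `C` (with
`0 ∈ C`) eventually exits, and never re-enters, the expansion by radius `r` of
any translate of `C`: the set of nonnegative ray parameters landing inside the
expanded translated cone is bounded above. -/
theorem stmt11 (C : Set Pt) (hconv : Convex ℝ C)
    (hcone : ∀ c : ℝ, 0 < c → ∀ x ∈ C, c • x ∈ C)
    (hclosed : IsClosed C) (h0 : (0 : Pt) ∈ C)
    (δ : Pt) (hδ : δ ≠ 0) (hδC : δ ∉ C) :
    ∀ p q : Pt, ∀ r : ℝ, 0 ≤ r →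
      BddAbove {t : ℝ | 0 ≤ t ∧ p + t • δ ∈ ({q} : Set Pt) + C + closedBall (0 : Pt) r} := by
  intro p q r hr
  obtain ⟨ε, hε, hball⟩ := Metric.isOpen_iff.1 hclosed.isOpen_compl δ hδC
  refine ⟨(‖p - q‖ + r) / ε, ?_⟩
  rintro t ⟨ht, hmem⟩
  obtain ⟨y, hy, b, hb, hyb⟩ := Set.mem_add.1 hmem
  obtain ⟨z, hqz, c, hc, hqc⟩ := Set.mem_add.1 hy
  rw [Set.mem_singleton_iff] at hqz
  subst hqz
  subst hqc
  rw [mem_closedBall_zero_iff] at hb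
  rcases ht.eq_or_lt with h | htpos
  · rw [← h]; positivity
  by_contra! hlt
  rw [div_lt_iff₀ hε] at hlt
  have hcC := hcone t⁻¹ (inv_pos.2 htpos) c hc
  refine hball (a := t⁻¹ • c) ?_ hcC
  have hceq : c - t • δ = (p - z) - b := by
    have h1 : c = p + t • δ - z - b := by rw [← hyb]; abel
    rw [h1]; abel
  have heq : t⁻¹ • c - δ = t⁻¹ • ((p - z) - b) := by
    rw [← hceq, smul_sub, smul_smul, inv_mul_cancel₀ htpos.ne.symm, one_smul]
  rw [mem_ball, dist_eq_norm, heq, norm_smul, Real.norm_of_nonneg (inv_pos.2 htpos).le,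
    inv_mul_lt_iff₀ htpos]
  linarith [norm_sub_le (p - z) b]
end

section
/- Let h ≥ 0, let 0 ≤ a ≤ b be reals, and let T ⊆ ℝ² be any set. Then the set V = {(v, ξ) ∈ ℝ² × ℝ : a ≤ ξ ≤ b ∧ ∀ t ∈ T, t + v ∈ closedBall((ξ,0), √(ξ² + h²))} is preconnected (hence connected whenever it is nonempty). -/
open Metric

/-- The point of `ℝ²` with coordinates `x`, `y`. -/
noncomputable def pt (x y : ℝ) : Pt := (WithLp.equiv 2 (Fin 2 → ℝ)).symm ![x, y]

/-- The set `V` of pairs `(v, ξ)` with `a ≤ ξ ≤ b` such that `T + v` is contained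
in the closed disc centered at `(ξ,0)` of radius `√(ξ² + h²)` is preconnected. -/
theorem stmt14 (h : ℝ) (hh : 0 ≤ h) (a b : ℝ) (ha : 0 ≤ a) (hab : a ≤ b)
    (T : Set Pt) :
    IsPreconnected {p : Pt × ℝ | a ≤ p.2 ∧ p.2 ≤ b ∧
      ∀ t ∈ T, t + p.1 ∈ closedBall (pt p.2 0) (Real.sqrt (p.2 ^ 2 + h ^ 2))} := by
  set V : Set (Pt × ℝ) := {p : Pt × ℝ | a ≤ p.2 ∧ p.2 ≤ b ∧
      ∀ t ∈ T, t + p.1 ∈ closedBall (pt p.2 0) (Real.sqrt (p.2 ^ 2 + h ^ 2))} with hV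
  have hpt : ∀ x y : ℝ, pt (x + y) 0 = pt x 0 + pt y 0 := by
    intro x y
    ext i
    fin_cases i <;> simp [pt]
  have hsm : ∀ c x : ℝ, pt (c * x) 0 = c • pt x 0 := by
    intro c x
    ext i
    fin_cases i <;> simp [pt]
  -- moving up with the relative position fixed
  have hup : ∀ (v : Pt) (ξ d : ℝ), (v, ξ) ∈ V → 0 ≤ d → ξ + d ≤ b →
      (v + pt d 0, ξ + d) ∈ V := by
    rintro v ξ d ⟨h1, h2, h3⟩ hd hb
    simp only at h1 h2 h3
    refine ⟨by simp only; linarith, hb, fun t ht => ?_⟩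
    have := h3 t ht
    rw [mem_closedBall, dist_eq_norm] at this ⊢
    simp only
    have e : t + (v + pt d 0) - pt (ξ + d) 0 = t + v - pt ξ 0 := by
      rw [hpt]; abel
    rw [e]
    refine this.trans (Real.sqrt_le_sqrt ?_)
    nlinarith
  have hjoin : ∀ p ∈ V, JoinedIn V p (p.1 + pt (b - p.2) 0, b) := by
    rintro ⟨v, ξ⟩ hp
    apply JoinedIn.of_segment_subset
    rw [segment_eq_image']
    rintro _ ⟨θ, ⟨h0, h1⟩, rfl⟩
    have hξ : ξ ≤ b := hp.2.1
    have := hup v ξ (θ * (b - ξ)) hp (mul_nonneg h0 (by linarith)) (by nlinarith)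
    rw [hsm] at this
    simpa using this
  have htop : ∀ v w : Pt, (v, b) ∈ V → (w, b) ∈ V → JoinedIn V (v, b) (w, b) := by
    intro v w hv hw
    apply JoinedIn.of_segment_subset
    rintro _ ⟨r, s, hr, hs, hrs, rfl⟩
    have eb : r * b + s * b = b := by rw [← add_mul, hrs, one_mul]
    have e : r • (v, b) + s • (w, b) = (r • v + s • w, b) := by
      simp [eb]
    rw [e]
    refine ⟨hab, le_refl b, fun t ht => ?_⟩
    have := convex_closedBall (pt b 0) (Real.sqrt (b ^ 2 + h ^ 2))
      (hv.2.2 t ht) (hw.2.2 t ht) hr hs hrs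
    have e2 : r • (t + v) + s • (t + w) = t + (r • v + s • w) := by
      have : t = (r + s) • t := by rw [hrs, one_smul]
      conv_rhs => rw [this]
      module
    rw [← e2]
    exact this
  rcases V.eq_empty_or_nonempty with he | hne
  · rw [he]; exact isPreconnected_empty
  · refine (IsPathConnected.isConnected (isPathConnected_iff.2 ⟨hne, ?_⟩)).isPreconnected
    intro p hp q hq
    have jp := hjoin p hp
    have jq := hjoin q hq
    exact (jp.trans (htop _ _ jp.target_mem jq.target_mem)).trans jq.symm
end

section
/- Let s₁, s₂, t₁, t₂ ∈ ℝ². There exist real numbers a, b, c such that for every v ∈ ℝ, the determinant of the 4×4 matrix with rows (1, s₁.1, s₁.2, s₁.1² + s₁.2²), (1, s₂.1, s₂.2, s₂.1² + s₂.2²), (1, t₁.1 + v, t₁.2, (t₁.1 + v)² + t₁.2²), (1, t₂.1 + v, t₂.2, (t₂.1 + v)² + t₂.2²) equals a·v² + b·v + c. In other words, the cocircularity condition for the four points s₁, s₂, t₁ + (v,0), t₂ + (v,0) is a polynomial equation of degree at most 2 in v. -/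
/-- The cocircularity determinant of `s₁`, `s₂`, `t₁ + (v,0)`, `t₂ + (v,0)` is a
polynomial of degree at most 2 in `v`. -/
theorem stmt15 (s₁ s₂ t₁ t₂ : ℝ × ℝ) :
    ∃ a b c : ℝ, ∀ v : ℝ,
      Matrix.det !![1, s₁.1, s₁.2, s₁.1 ^ 2 + s₁.2 ^ 2;
                    1, s₂.1, s₂.2, s₂.1 ^ 2 + s₂.2 ^ 2;
                    1, t₁.1 + v, t₁.2, (t₁.1 + v) ^ 2 + t₁.2 ^ 2;
                    1, t₂.1 + v, t₂.2, (t₂.1 + v) ^ 2 + t₂.2 ^ 2] =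
        a * v ^ 2 + b * v + c := by
  obtain ⟨p, q⟩ := s₁
  obtain ⟨r, s⟩ := s₂
  obtain ⟨x, y⟩ := t₁
  obtain ⟨z, w⟩ := t₂
  -- interpolate the determinant at `v = 0, 1, -1`
  let D : ℝ → ℝ := fun v =>
    Matrix.det !![1, p, q, p ^ 2 + q ^ 2;
                  1, r, s, r ^ 2 + s ^ 2;
                  1, x + v, y, (x + v) ^ 2 + y ^ 2;
                  1, z + v, w, (z + v) ^ 2 + w ^ 2]
  refine ⟨(D 1 + D (-1)) / 2 - D 0, (D 1 - D (-1)) / 2, D 0, fun v => ?_⟩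
  simp [D, Matrix.det_succ_row_zero, Fin.sum_univ_succ, Fin.succAbove]
  ring
end

section
/- Let V be a finite set and let r : V → V → Prop be an irreflexive relation (a finite digraph without self-loops). For v ∈ V let d⁺(v) denote the number of w ∈ V with r v w (the out-degree of v). Then there exists a subset V′ ⊆ V such that the restriction of r to V′ is acyclic (the transitive closure of the restricted relation is irreflexive) and |V′| ≥ ∑_{v ∈ V} 1/(d⁺(v) + 1). The same bound holds with out-degrees replaced by in-degrees d⁻(v) = |{w : r w v}|. -/
open Classical in
/-- Greedy form of the bound, with a rank function witnessing acyclicity. -/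
lemma acyclic_aux {V : Type*} [Fintype V] (r : V → V → Prop)
    (hirr : ∀ v : V, ¬ r v v) (n : ℕ) : ∀ S : Finset V, S.card ≤ n →
    ∃ T : Finset V, T ⊆ S ∧ (∃ f : V → ℕ, ∀ a ∈ T, ∀ b ∈ T, r a b → f a < f b) ∧
      ∑ v ∈ S, (1 : ℝ) / ((Finset.univ.filter fun w => r v w).card + 1) ≤ T.card := by
  induction n with
  | zero =>
    intro S hS
    have : S = ∅ := by simpa using hS
    subst this
    exact ⟨∅, by simp, ⟨fun _ => 0, by simp⟩, by simp⟩
  | succ n ih =>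
    intro S hS
    rcases S.eq_empty_or_nonempty with rfl | hne
    · exact ⟨∅, by simp, ⟨fun _ => 0, by simp⟩, by simp⟩
    set w : V → ℝ := fun v => (1 : ℝ) / ((Finset.univ.filter fun w => r v w).card + 1) with hw
    have hsum : ∑ v ∈ S, ∑ u ∈ S with (u = v ∨ r u v), w u ≤ ∑ v ∈ S, (1 : ℝ) := by
      simp_rw [Finset.sum_filter]
      rw [Finset.sum_comm]
      refine Finset.sum_le_sum fun u _ => ?_
      rw [← Finset.sum_filter, Finset.sum_const, nsmul_eq_mul]
      have hc : (S.filter fun v => u = v ∨ r u v).card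
          ≤ (Finset.univ.filter fun w => r u w).card + 1 := by
        refine le_trans (Finset.card_le_card ?_)
          (Finset.card_insert_le u (Finset.univ.filter fun w => r u w))
        intro x hx
        simp only [Finset.mem_filter, Finset.mem_insert, Finset.mem_univ, true_and] at hx ⊢
        rcases hx.2 with h | h
        · exact Or.inl h.symm
        · exact Or.inr h
      have hc' : ((S.filter fun v => u = v ∨ r u v).card : ℝ)
          ≤ (Finset.univ.filter fun w => r u w).card + 1 := by exact_mod_cast hc
      simp only [hw]
      rw [mul_one_div]
      exact div_le_one_of_le₀ hc' (by positivity)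
    obtain ⟨v, hvS, hv⟩ := Finset.exists_le_of_sum_le hne hsum
    have hlt : (S.filter fun u => ¬ (u = v ∨ r u v)).card < S.card := by
      refine Finset.card_lt_card ((Finset.filter_ssubset).2 ⟨v, hvS, by simp⟩)
    obtain ⟨T, hTS, ⟨f, hf⟩, hT⟩ := ih (S.filter fun u => ¬ (u = v ∨ r u v)) (by omega)
    have hT' : ∀ x ∈ T, x ∈ S ∧ x ≠ v ∧ ¬ r x v := by
      intro x hx
      have := hTS hx
      simpa [not_or] using this
    have hvT : v ∉ T := fun h => (hT' v h).2.1 rfl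
    refine ⟨insert v T, ?_, ⟨fun x => if x = v then 0 else f x + 1, ?_⟩, ?_⟩
    · intro x hx
      rcases Finset.mem_insert.1 hx with rfl | h
      · exact hvS
      · exact (hT' x h).1
    · intro a ha b hb hab
      rcases Finset.mem_insert.1 ha with rfl | haT
      · rcases Finset.mem_insert.1 hb with rfl | hb
        · exact absurd hab (hirr _)
        · simp [(hT' b hb).2.1]
      · rcases Finset.mem_insert.1 hb with rfl | hb
        · exact absurd hab (hT' a haT).2.2
        · simpa [(hT' b hb).2.1, (hT' a haT).2.1] using hf a haT b hb hab
    · rw [Finset.card_insert_of_notMem hvT,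
        ← Finset.sum_filter_add_sum_filter_not S (fun u => u = v ∨ r u v)]
      push_cast
      linarith

/-- A rank function rules out directed cycles. -/
lemma acyclic_of_rank {V : Type*} (R : V → V → Prop) (f : V → ℕ)
    (h : ∀ a b, R a b → f a < f b) (v : V) : ¬ Relation.TransGen R v v := by
  intro hv
  have key : ∀ b, Relation.TransGen R v b → f v < f b := by
    intro b hb
    induction hb with
    | single h1 => exact h _ _ h1
    | tail _ h1 ih => exact ih.trans (h _ _ h1)
  exact lt_irrefl _ (key v hv)

/-- Every finite digraph without self-loops has an induced acyclic vertex set of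
size at least `∑_v 1/(d⁺(v) + 1)`, and likewise with in-degrees. -/
theorem stmt16 {V : Type*} [Fintype V] (r : V → V → Prop) [DecidableRel r]
    (hirr : ∀ v : V, ¬ r v v) :
    (∃ V' : Finset V,
      (∀ v : V, ¬ Relation.TransGen (fun a b : V => a ∈ V' ∧ b ∈ V' ∧ r a b) v v) ∧
      ∑ v : V, (1 : ℝ) / ((Finset.univ.filter fun w => r v w).card + 1) ≤ V'.card) ∧
    (∃ V' : Finset V,
      (∀ v : V, ¬ Relation.TransGen (fun a b : V => a ∈ V' ∧ b ∈ V' ∧ r a b) v v) ∧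
      ∑ v : V, (1 : ℝ) / ((Finset.univ.filter fun w => r w v).card + 1) ≤ V'.card) := by
  constructor
  · obtain ⟨T, -, ⟨f, hf⟩, hT⟩ := acyclic_aux r hirr _ Finset.univ le_rfl
    refine ⟨T, acyclic_of_rank _ f fun a b h => hf a h.1 b h.2.1 h.2.2, ?_⟩
    convert hT
  · obtain ⟨T, -, ⟨f, hf⟩, hT⟩ := acyclic_aux (fun a b => r b a) hirr _ Finset.univ le_rfl
    refine ⟨T, fun v hv => ?_, ?_⟩
    · rw [← Relation.transGen_swap] at hv
      exact acyclic_of_rank _ f (fun a b h => hf a h.2.1 b h.1 h.2.2) v hv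
    · convert hT
end
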